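/- Let A = [a_1, ..., a_n] ∈ ℝ^{m×n} be nonzero and let (B, N) be the canonical partition of {1,...,n}, i.e., B ∪ N = {1,...,n}, B ∩ N = ∅, there exists x_B > 0 with A_B x_B = 0, and there exists y ∈ ℝ^m with A_N^T y > 0 and A_B^T y = 0. If N = ∅, then L := span(A_B) ≠ {0} and φ(A) ≥ |ρ_B(A)|, where ρ_B(A) := max_{z ∈ L, ‖z‖₂=1} min_{i ∈ B} ⟨a_i, z⟩. -/

import Mathlib

open scoped RealInnerProductSpace BigOperators

/-- `comb a x = A x`, the combination `∑ i, x i • a i` of the columns `a i` of `A`. -/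
noncomputable def comb {m n : ℕ} (a : Fin n → EuclideanSpace ℝ (Fin m)) (x : Fin n → ℝ) :
    EuclideanSpace ℝ (Fin m) := ∑ i, x i • a i

/-- `φ(A, x) = sup {λ > 0 : ∃ u v ∈ Δ_{n-1}, S(u) ⊆ S(x), Au - Av = (λ/‖Ax‖) Ax}`. -/
noncomputable def phiAt {m n : ℕ} (a : Fin n → EuclideanSpace ℝ (Fin m))
    (x : Fin n → ℝ) : ℝ :=
  sSup {lam : ℝ | 0 < lam ∧ ∃ u ∈ stdSimplex ℝ (Fin n), ∃ v ∈ stdSimplex ℝ (Fin n),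
    (∀ i, 0 < u i → 0 < x i) ∧
    comb a u - comb a v = (lam / ‖comb a x‖) • comb a x}

/-- The restricted width `φ(A) = min {φ(A, x) : x ≥ 0, Ax ≠ 0}`. -/
noncomputable def phi {m n : ℕ} (a : Fin n → EuclideanSpace ℝ (Fin m)) : ℝ :=
  sInf {t : ℝ | ∃ x : Fin n → ℝ, (∀ i, 0 ≤ x i) ∧ comb a x ≠ 0 ∧ t = phiAt a x}

/-!
Let `L` be the span of the columns. If every unit `z ∈ L` has a column with `⟪a i, z⟫ ≤ -r`, then
`conv {a i}` contains the ball of radius `r` in `L`: for `w` in that ball and `v` its nearest point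
in the hull, the direction `v - w ∈ L` would otherwise violate the assumption. A positive
combination of the columns being zero forces `ρ ≤ 0`, so `r = -ρ = |ρ|` is admissible. Given
`x ≥ 0` with `Ax ≠ 0`, one may now take `u` to be `x` rescaled into the simplex and `v` with
`Av = -(r/‖Ax‖) Ax`, and `Au - Av` is then a multiple of `Ax` of length at least `r`.
-/

section InnerProductSpace

variable {ι E : Type*} [NormedAddCommGroup E] [InnerProductSpace ℝ E]

theorem inter_closedBall_subset_of_forall_exists_inner_le {K : Set E} {L : Submodule ℝ E} {r : ℝ}
    (hne : K.Nonempty) (hcomplete : IsComplete K) (hconv : Convex ℝ K) (hKL : K ⊆ L)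
    (h : ∀ z ∈ L, ‖z‖ = 1 → ∃ x ∈ K, ⟪x, z⟫ ≤ -r) :
    (L : Set E) ∩ Metric.closedBall 0 r ⊆ K := by
  rintro w ⟨hwL, hwr⟩
  rw [mem_closedBall_zero_iff] at hwr
  obtain ⟨v, hvK, hmin⟩ := exists_norm_eq_iInf_of_complete_convex hne hcomplete hconv w
  suffices v - w = 0 by rwa [← sub_eq_zero.1 this]
  by_contra hz
  have hzpos : 0 < ‖v - w‖ := norm_pos_iff.2 hz
  obtain ⟨x, hxK, hx⟩ := h ((‖v - w‖⁻¹ : ℝ) • (v - w))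
    (L.smul_mem _ (L.sub_mem (hKL hvK) hwL)) (norm_smul_inv_norm hz)
  have hx' : ⟪x, v - w⟫ ≤ ‖v - w‖ * -r := by
    rwa [inner_smul_right, inv_mul_le_iff₀ hzpos] at hx
  have hvx : ⟪v, v - w⟫ ≤ ⟪x, v - w⟫ := by
    have hobtuse := (norm_eq_iInf_iff_real_inner_le_zero hconv hvK).1 hmin x hxK
    rw [← neg_sub v w, inner_neg_left, real_inner_comm, inner_sub_left] at hobtuse
    linarith
  have hw : -⟪w, v - w⟫ ≤ ‖v - w‖ * r :=
    calc -⟪w, v - w⟫ ≤ ‖w‖ * ‖v - w‖ := neg_le.1 (neg_le_of_abs_le (abs_real_inner_le_norm _ _))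
      _ ≤ r * ‖v - w‖ := by gcongr
      _ = ‖v - w‖ * r := mul_comm _ _
  have hle : ‖v - w‖ ^ 2 ≤ 0 :=
    calc ‖v - w‖ ^ 2 = ⟪v, v - w⟫ - ⟪w, v - w⟫ := by
          rw [← inner_sub_left, real_inner_self_eq_norm_sq]
      _ ≤ 0 := by linarith
  exact hle.not_gt (pow_pos hzpos 2)

theorem span_inter_closedBall_subset_convexHull_range [Finite ι] [Nonempty ι] {a : ι → E} {ρ : ℝ}
    (h : ∀ z ∈ Submodule.span ℝ (Set.range a), ‖z‖ = 1 → ⨅ i, ⟪a i, z⟫ ≤ ρ) :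
    (Submodule.span ℝ (Set.range a) : Set E) ∩ Metric.closedBall 0 (-ρ) ⊆
      convexHull ℝ (Set.range a) := by
  refine inter_closedBall_subset_of_forall_exists_inner_le (Set.range_nonempty a).convexHull
    ((Set.finite_range a).isCompact_convexHull ℝ).isComplete (convex_convexHull ℝ _)
    (convexHull_min Submodule.subset_span (Submodule.convex _)) fun z hz hz1 => ?_
  obtain ⟨i, hi⟩ := exists_eq_ciInf_of_finite (f := fun i => ⟪a i, z⟫)
  exact ⟨a i, subset_convexHull ℝ _ (Set.mem_range_self i),
    (hi.trans_le (h z hz hz1)).trans_eq (neg_neg ρ).symm⟩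

theorem iInf_inner_nonpos_of_sum_smul_eq_zero [Fintype ι] {a : ι → E} {x : ι → ℝ} (hx : 0 < x)
    (h : ∑ i, x i • a i = 0) (z : E) : ⨅ i, ⟪a i, z⟫ ≤ 0 := by
  by_contra! hpos
  have hinner : ∀ i, 0 < ⟪a i, z⟫ := fun i => hpos.trans_le (Finite.ciInf_le _ i)
  obtain ⟨hx0, j, hj⟩ := Pi.lt_def.1 hx
  have hsum : 0 < ∑ i, x i * ⟪a i, z⟫ :=
    Finset.sum_pos' (fun i _ => mul_nonneg (hx0 i) (hinner i).le)
      ⟨j, Finset.mem_univ j, mul_pos hj (hinner j)⟩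
  refine hsum.ne' ?_
  calc ∑ i, x i * ⟪a i, z⟫ = ⟪∑ i, x i • a i, z⟫ := by
        simp only [sum_inner, real_inner_smul_left]
    _ = 0 := by rw [h, inner_zero_left]

end InnerProductSpace

theorem sInf_setOf_exists_eq {α : Type*} [InfSet α] {ι : Sort*} (f : ι → α) :
    sInf {s | ∃ i, s = f i} = ⨅ i, f i :=
  congrArg sInf (Set.ext fun _ => exists_congr fun _ => eq_comm)

theorem inv_sum_smul_mem_stdSimplex {𝕜 ι : Type*} [Field 𝕜] [LinearOrder 𝕜]
    [IsStrictOrderedRing 𝕜] [Fintype ι] {x : ι → 𝕜} (hx : 0 < x) :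
    (∑ i, x i)⁻¹ • x ∈ stdSimplex 𝕜 ι := by
  have hsum : 0 < ∑ i, x i := Fintype.sum_pos hx
  refine ⟨smul_nonneg (inv_nonneg.2 hsum.le) hx.le, ?_⟩
  simp only [Pi.smul_apply, smul_eq_mul, ← Finset.mul_sum, inv_mul_cancel₀ hsum.ne']

theorem linearCombination_image_stdSimplex {𝕜 ι E : Type*} [Field 𝕜] [LinearOrder 𝕜]
    [IsStrictOrderedRing 𝕜] [Fintype ι] [AddCommGroup E] [Module 𝕜 E] (a : ι → E) :
    Fintype.linearCombination 𝕜 a '' stdSimplex 𝕜 ι = convexHull 𝕜 (Set.range a) := by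
  classical
  rw [← convexHull_rangle_single_eq_stdSimplex, LinearMap.image_convexHull, ← Set.range_comp]
  congr 2
  ext i
  simp

section Phi

variable {m n : ℕ} {a : Fin n → EuclideanSpace ℝ (Fin m)} {x : Fin n → ℝ} {r : ℝ}

theorem comb_eq_linearCombination (a : Fin n → EuclideanSpace ℝ (Fin m)) :
    comb a = Fintype.linearCombination ℝ a :=
  rfl

theorem comb_image_stdSimplex (a : Fin n → EuclideanSpace ℝ (Fin m)) :
    comb a '' stdSimplex ℝ (Fin n) = convexHull ℝ (Set.range a) :=
  linearCombination_image_stdSimplex a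

theorem comb_mem_span (a : Fin n → EuclideanSpace ℝ (Fin m)) (x : Fin n → ℝ) :
    comb a x ∈ Submodule.span ℝ (Set.range a) :=
  Submodule.sum_smul_mem _ _ fun i _ => Submodule.subset_span (Set.mem_range_self i)

/-- The set of step lengths `λ` whose supremum is `φ(A, x)`. -/
def feasibleScales (a : Fin n → EuclideanSpace ℝ (Fin m)) (x : Fin n → ℝ) : Set ℝ :=
  {lam : ℝ | 0 < lam ∧ ∃ u ∈ stdSimplex ℝ (Fin n), ∃ v ∈ stdSimplex ℝ (Fin n),
    (∀ i, 0 < u i → 0 < x i) ∧ comb a u - comb a v = (lam / ‖comb a x‖) • comb a x}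

theorem phiAt_eq_sSup_feasibleScales (a : Fin n → EuclideanSpace ℝ (Fin m)) (x : Fin n → ℝ) :
    phiAt a x = sSup (feasibleScales a x) :=
  rfl

theorem bddAbove_feasibleScales (hAx : comb a x ≠ 0) : BddAbove (feasibleScales a x) := by
  refine ⟨Metric.diam (convexHull ℝ (Set.range a)), ?_⟩
  rintro lam ⟨hlam, u, hu, v, hv, -, huv⟩
  have hmem : ∀ w ∈ stdSimplex ℝ (Fin n), comb a w ∈ convexHull ℝ (Set.range a) := fun w hw =>
    comb_image_stdSimplex a ▸ Set.mem_image_of_mem _ hw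
  calc lam = ‖(lam / ‖comb a x‖) • comb a x‖ := by
        rw [norm_smul, norm_div, norm_norm, div_mul_cancel₀ _ (norm_ne_zero_iff.2 hAx),
          Real.norm_of_nonneg hlam.le]
    _ = dist (comb a u) (comb a v) := by rw [← huv, dist_eq_norm]
    _ ≤ Metric.diam (convexHull ℝ (Set.range a)) :=
        Metric.dist_le_diam_of_mem (isBounded_convexHull.2 (Set.finite_range a).isBounded)
          (hmem u hu) (hmem v hv)

theorem norm_div_sum_add_mem_feasibleScales (hr : 0 ≤ r) (hx : 0 ≤ x) (hAx : comb a x ≠ 0)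
    (hmem : -(r / ‖comb a x‖) • comb a x ∈ convexHull ℝ (Set.range a)) :
    ‖comb a x‖ / ∑ i, x i + r ∈ feasibleScales a x := by
  have hnorm : 0 < ‖comb a x‖ := norm_pos_iff.2 hAx
  have hxpos : 0 < x := hx.lt_of_ne' (by rintro rfl; exact hAx (by simp [comb]))
  have hsum : 0 < ∑ i, x i := Fintype.sum_pos hxpos
  obtain ⟨v, hv, hAv⟩ := (comb_image_stdSimplex a).symm ▸ hmem
  refine ⟨by positivity, (∑ i, x i)⁻¹ • x, inv_sum_smul_mem_stdSimplex hxpos, v, hv,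
    fun i hi => pos_of_mul_pos_right hi (inv_nonneg.2 hsum.le), ?_⟩
  rw [hAv, comb_eq_linearCombination, map_smul, ← comb_eq_linearCombination, ← sub_smul]
  congr 1
  field_simp
  ring

theorem le_phiAt (hr : 0 ≤ r) (hx : 0 ≤ x) (hAx : comb a x ≠ 0)
    (hmem : -(r / ‖comb a x‖) • comb a x ∈ convexHull ℝ (Set.range a)) : r ≤ phiAt a x := by
  rw [phiAt_eq_sSup_feasibleScales]
  calc r ≤ ‖comb a x‖ / ∑ i, x i + r :=
        le_add_of_nonneg_left (div_nonneg (norm_nonneg _) (Finset.sum_nonneg fun i _ => hx i))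
    _ ≤ sSup (feasibleScales a x) :=
        le_csSup (bddAbove_feasibleScales hAx) (norm_div_sum_add_mem_feasibleScales hr hx hAx hmem)

theorem le_phi (hr : 0 ≤ r) (ha : ∃ i, a i ≠ 0)
    (hball : (Submodule.span ℝ (Set.range a) : Set (EuclideanSpace ℝ (Fin m))) ∩
      Metric.closedBall 0 r ⊆ convexHull ℝ (Set.range a)) : r ≤ phi a := by
  obtain ⟨j, hj⟩ := ha
  have hsingle : comb a (Pi.single j 1) = a j := by simp [comb_eq_linearCombination]
  refine le_csInf ⟨_, Pi.single j 1, (single_mem_stdSimplex ℝ j).1, by rwa [hsingle], rfl⟩ ?_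
  rintro _ ⟨x, hx, hAx, rfl⟩
  refine le_phiAt hr hx hAx (hball ⟨Submodule.smul_mem _ _ (comb_mem_span a x), ?_⟩)
  rw [mem_closedBall_zero_iff, norm_smul, norm_neg, norm_div, norm_norm,
    div_mul_cancel₀ _ (norm_ne_zero_iff.2 hAx), Real.norm_of_nonneg hr]

end Phi

/-- for the canonical partition `(B, N)` of a nonzero matrix `A`, if
`N = ∅` then `L := span(A_B) ≠ {0}` and `φ(A) ≥ |ρ_B(A)|`, where
`ρ_B(A) = max_{z ∈ L, ‖z‖=1} min_{i ∈ B} ⟪a i, z⟫`. -/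
theorem stmt15 (m n : ℕ) (hn : 0 < n) (a : Fin n → EuclideanSpace ℝ (Fin m))
    (hA : ∃ i, a i ≠ 0) (B N : Finset (Fin n))
    (hBN : B ∪ N = Finset.univ) (hdisj : B ∩ N = ∅)
    (hB : ∃ xB : Fin n → ℝ, (∀ i ∈ B, 0 < xB i) ∧ ∑ i ∈ B, xB i • a i = 0)
    (hN : ∃ y : EuclideanSpace ℝ (Fin m),
      (∀ i ∈ N, 0 < ⟪a i, y⟫) ∧ ∀ i ∈ B, ⟪a i, y⟫ = 0)
    (hNempty : N = ∅) (ρB : ℝ)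
    (hρB : IsGreatest
      {t : ℝ | ∃ z : EuclideanSpace ℝ (Fin m),
        z ∈ Submodule.span ℝ (a '' (B : Set (Fin n))) ∧ ‖z‖ = 1 ∧
        t = sInf {s : ℝ | ∃ i ∈ B, s = ⟪a i, z⟫}} ρB) :
    Submodule.span ℝ (a '' (B : Set (Fin n))) ≠ ⊥ ∧ |ρB| ≤ phi a := by
  obtain rfl : B = Finset.univ := by rw [← hBN, hNempty, Finset.union_empty]
  simp only [Finset.coe_univ, Set.image_univ, Finset.mem_univ, true_and, forall_const,
    sInf_setOf_exists_eq] at hB hρB ⊢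
  obtain ⟨x, hx, hAx⟩ := hB
  obtain ⟨j, hj⟩ := hA
  have : Nonempty (Fin n) := ⟨j⟩
  have hρ : ρB ≤ 0 := by
    obtain ⟨z, -, -, rfl⟩ := hρB.1
    exact iInf_inner_nonpos_of_sum_smul_eq_zero (Pi.lt_def.2 ⟨fun i => (hx i).le, j, hx j⟩) hAx z
  constructor
  · rw [Ne, Submodule.span_eq_bot]
    exact fun h => hj (h _ (Set.mem_range_self j))
  · rw [abs_of_nonpos hρ]
    exact le_phi (neg_nonneg.2 hρ) ⟨j, hj⟩ <|
      span_inter_closedBall_subset_convexHull_range fun z hz hz1 => hρB.2 ⟨z, hz, hz1, rfl⟩
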